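/- Let γ^1,…,γ^n be a Clifford family of N×N complex matrices, γ^{ab} := (1/2)(γ^a γ^b − γ^b γ^a), L^{ab}(u) := u·δ^{ab}·1_N − (1/2)·γ^{ab}, β := n/2 − 1, and let R^{a_1 a_2}_{b_1 b_2}(u) := u(u+β)·δ^{a_1}_{b_1}δ^{a_2}_{b_2} + (u+β)·δ^{a_1}_{b_2}δ^{a_2}_{b_1} − u·δ^{a_1 a_2}δ_{b_1 b_2} (complex scalars). Then the RLL Yang–Baxter relation holds for all complex u, v and all indices a_1, a_2, c_1, c_2 ∈ {1,…,n}: Σ_{b_1,b_2} R^{a_1 a_2}_{b_1 b_2}(u) · L^{b_1 c_1}(u+v) · L^{b_2 c_2}(v) = Σ_{b_1,b_2} L^{a_2 b_2}(v) · L^{a_1 b_1}(u+v) · R^{b_1 b_2}_{c_1 c_2}(u), where the products are products of N×N matrices. -/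

import Mathlib

/-!
Write `w = u + v`. By the Clifford relations `L(u)^{ab} = (u + 1/2) δ^{ab} - (1/2) γ^a γ^b`. The
three terms of `R` reduce the difference of the two sides to the commutator
`[L(w)^{a₁c₁}, L(v)^{a₂c₂}]`, the exchange term
`L(w)^{a₂c₁} L(v)^{a₁c₂} - L(v)^{a₂c₁} L(w)^{a₁c₂}` and the two traces over a repeated index. The
scalar parts of the traces cancel, and what remains is a linear combination of products `γ^a γ^b`.
The exchange term is proportional to `w - v = u` and, since `γ^b γ^c γ^b` sums to `(2 - n) γ^c`, the
traces contribute the factor `u + β`, so every coefficient has the factor `u (u + β) / 2`; up to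
this factor, the terms cancel by the `so(n)` commutation relations of the `γ^a γ^b`.
-/

/-- The crossing parameter `β = n / 2 - 1` of the orthogonal R-matrix in dimension `n = |ι|`. -/
def crossingParameter (K ι : Type*) [CommRing K] [Invertible (2 : K)] [Fintype ι] : K :=
  Fintype.card ι * ⅟2 - 1

section SpinorRLL

variable {K ι A : Type*} [CommRing K] [DecidableEq ι] [Ring A] [Algebra K A]

local notation "δ" => (1 : Matrix ι ι K)

section Clifford

variable (K) in
/-- A Clifford family for the standard Euclidean form: generators of a `K`-algebra with
anticommutators `2 δ^{ab}`. -/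
def IsCliffordFamily (γ : ι → A) : Prop :=
  ∀ a b, γ a * γ b + γ b * γ a = (2 * δ a b) • (1 : A)

theorem lie_mul_mul_eq_anticommutators (a b c d : A) :
    ⁅a * c, b * d⁆ = a * (b * c + c * b) * d - (a * b + b * a) * c * d
      + b * a * (c * d + d * c) - b * (a * d + d * a) * c := by
  rw [Ring.lie_def]
  noncomm_ring

namespace IsCliffordFamily

variable {γ : ι → A}

theorem mul_swap (hγ : IsCliffordFamily K γ) (a b : ι) :
    γ b * γ a = (2 * δ a b) • (1 : A) - γ a * γ b :=
  eq_sub_of_add_eq' (hγ a b)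

theorem lie_mul_mul (hγ : IsCliffordFamily K γ) (a b c d : ι) :
    ⁅γ a * γ c, γ b * γ d⁆ = (2 * δ b c) • (γ a * γ d) - (2 * δ a b) • (γ c * γ d)
      + (2 * δ c d) • (γ b * γ a) - (2 * δ a d) • (γ b * γ c) := by
  rw [lie_mul_mul_eq_anticommutators, hγ b c, hγ a b, hγ c d, hγ a d]
  simp only [mul_smul_comm, smul_mul_assoc, mul_one, one_mul]

variable [Invertible (2 : K)]

theorem mul_self (hγ : IsCliffordFamily K γ) (a : ι) : γ a * γ a = 1 := by
  have two_smul_sq : (2 : K) • (γ a * γ a) = (2 : K) • (1 : A) := by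
    simpa only [two_smul K (γ a * γ a), Matrix.one_apply_eq, mul_one] using hγ a a
  exact (isUnit_of_invertible (2 : K)).smul_left_cancel.mp two_smul_sq

theorem sum_mul_mul_self [Fintype ι] (hγ : IsCliffordFamily K γ) (c : ι) :
    ∑ b, γ b * γ c * γ b = (2 - Fintype.card ι : K) • γ c := by
  have conj (b : ι) : γ b * γ c * γ b = (2 * δ c b) • γ b - γ c := by
    rw [hγ.mul_swap, sub_mul, smul_one_mul, mul_assoc, hγ.mul_self, mul_one]
  simp only [conj, Finset.sum_sub_distrib, Finset.sum_const, Finset.card_univ, Matrix.one_apply,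
    mul_ite, mul_one, mul_zero, ite_smul, zero_smul, Finset.sum_ite_eq, Finset.mem_univ, if_true,
    sub_smul, Nat.cast_smul_eq_nsmul]

end IsCliffordFamily

end Clifford

section OrthogonalR

/-- The fundamental orthogonal R-matrix `R^{a₁a₂}_{b₁b₂}(u)`, for an arbitrary value of the crossing
parameter `β`. -/
def orthogonalR (β u : K) (a₁ a₂ b₁ b₂ : ι) : K :=
  u * (u + β) * δ a₁ b₁ * δ a₂ b₂ + (u + β) * δ a₁ b₂ * δ a₂ b₁ - u * δ a₁ a₂ * δ b₁ b₂

theorem orthogonalR_swap (β u : K) (a₁ a₂ b₁ b₂ : ι) :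
    orthogonalR β u b₁ b₂ a₁ a₂ = orthogonalR β u a₁ a₂ b₁ b₂ := by
  have symm (a b : ι) : δ a b = δ b a := Matrix.isSymm_one.apply b a
  rw [orthogonalR, orthogonalR, symm b₁ a₁, symm b₂ a₂, symm b₁ a₂, symm b₂ a₁]
  ring

variable [Fintype ι] {V : Type*} [AddCommGroup V] [Module K V]

theorem sum_orthogonalR_smul (β u : K) (a₁ a₂ : ι) (F : ι → ι → V) :
    ∑ b₁, ∑ b₂, orthogonalR β u a₁ a₂ b₁ b₂ • F b₁ b₂ =
      (u * (u + β)) • F a₁ a₂ + (u + β) • F a₂ a₁ - (u * δ a₁ a₂) • ∑ b, F b b := by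
  simp [orthogonalR, Matrix.one_apply, sub_smul, add_smul, Finset.sum_add_distrib,
    Finset.sum_sub_distrib, ite_smul, Finset.smul_sum]

end OrthogonalR

section SpinorL

variable [Invertible (2 : K)]

/-- The spinor L-operator `L^{ab}(u) = u δ^{ab} - (1/2) γ^{ab}`, where
`γ^{ab} = (1/2) (γ^a γ^b - γ^b γ^a)`. -/
def spinorL (γ : ι → A) (u : K) (a b : ι) : A :=
  (u * δ a b) • (1 : A) - (⅟2 : K) • (⅟2 : K) • (γ a * γ b - γ b * γ a)

theorem spinorL_swap (γ : ι → A) (u : K) (a b : ι) :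
    spinorL γ u a b = -spinorL γ (-u) b a := by
  rw [spinorL, spinorL, Matrix.isSymm_one.apply b a]
  module

namespace IsCliffordFamily

variable {γ : ι → A}

theorem spinorL_eq (hγ : IsCliffordFamily K γ) (u : K) (a b : ι) :
    spinorL γ u a b = ((u + ⅟2) * δ a b) • (1 : A) - (⅟2 : K) • (γ a * γ b) := by
  have two_mul_half : (2 : K) * ⅟2 = 1 := mul_invOf_self 2
  rw [spinorL, hγ.mul_swap a b]
  match_scalars
  · linear_combination (⅟2 * δ a b) * two_mul_half
  · linear_combination (-⅟2) * two_mul_half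

theorem lie_spinorL (hγ : IsCliffordFamily K γ) (u v : K) (a b c d : ι) :
    ⁅spinorL γ u a c, spinorL γ v b d⁆ = (⅟2 : K) •
      (δ b c • (γ a * γ d) - δ a b • (γ c * γ d) + δ c d • (γ b * γ a) - δ a d • (γ b * γ c)) := by
  have two_mul_half : (2 : K) * ⅟2 = 1 := mul_invOf_self 2
  have lie_eq : ⁅spinorL γ u a c, spinorL γ v b d⁆ =
      (⅟2 * ⅟2 : K) • ⁅γ a * γ c, γ b * γ d⁆ := by
    simp only [hγ.spinorL_eq, Ring.lie_def, sub_mul, mul_sub, smul_mul_smul_comm, one_mul, mul_one]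
    module
  rw [lie_eq, hγ.lie_mul_mul]
  match_scalars
  · linear_combination (⅟2 * δ b c) * two_mul_half
  · linear_combination (-⅟2 * δ a b) * two_mul_half
  · linear_combination (⅟2 * δ c d) * two_mul_half
  · linear_combination (-⅟2 * δ a d) * two_mul_half

theorem spinorL_mul_sub_spinorL_mul (hγ : IsCliffordFamily K γ) (u v : K) (a b c d : ι) :
    spinorL γ u b c * spinorL γ v a d - spinorL γ v b c * spinorL γ u a d =
      (⅟2 * (u - v)) • (δ a d • (γ b * γ c) - δ b c • (γ a * γ d)) := by
  simp only [hγ.spinorL_eq, sub_mul, mul_sub, smul_mul_smul_comm, one_mul, mul_one]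
  module

variable [Fintype ι]

theorem sum_spinorL_mul_spinorL_left (hγ : IsCliffordFamily K γ) (u v : K) (c d : ι) :
    ∑ b, spinorL γ u b c * spinorL γ v b d =
      ((u - ⅟2) * (v + ⅟2) * δ c d) • (1 : A)
        - (⅟2 * (u - v + crossingParameter K ι)) • (γ c * γ d) := by
  have two_mul_half : (2 : K) * ⅟2 = 1 := mul_invOf_self 2
  have expand (b : ι) : spinorL γ u b c * spinorL γ v b d =
      δ b c • (((u + ⅟2) * (v + ⅟2) * δ b d) • (1 : A) - ((u + ⅟2) * ⅟2) • (γ b * γ d))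
        - δ b d • (((v + ⅟2) * ⅟2) • (γ b * γ c))
        + (⅟2 * ⅟2 : K) • (γ b * γ c * γ b * γ d) := by
    simp only [hγ.spinorL_eq, sub_mul, mul_sub, smul_mul_smul_comm, one_mul, mul_one, ← mul_assoc]
    module
  have delta_sum (e : ι) (f : ι → A) : ∑ b, δ b e • f b = f e := by
    simp [Matrix.one_apply]
  simp only [expand, Finset.sum_add_distrib, Finset.sum_sub_distrib, delta_sum,
    ← Finset.smul_sum, ← Finset.sum_mul, hγ.sum_mul_mul_self, hγ.mul_swap c d,
    crossingParameter, smul_mul_assoc]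
  match_scalars
  · ring
  · linear_combination (⅟2 : K) * two_mul_half

theorem sum_spinorL_mul_spinorL_right (hγ : IsCliffordFamily K γ) (u v : K) (c d : ι) :
    ∑ b, spinorL γ v c b * spinorL γ u d b =
      ((u - ⅟2) * (v + ⅟2) * δ c d) • (1 : A)
        - (⅟2 * (u - v + crossingParameter K ι)) • (γ c * γ d) := by
  simp only [spinorL_swap γ _ c, spinorL_swap γ _ d, neg_mul_neg, hγ.sum_spinorL_mul_spinorL_left]
  module

end IsCliffordFamily

theorem spinor_RLL_YangBaxter_general [Fintype ι] {γ : ι → A} (hγ : IsCliffordFamily K γ)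
    (u v : K) (a₁ a₂ c₁ c₂ : ι) :
    ∑ b₁, ∑ b₂, orthogonalR (crossingParameter K ι) u a₁ a₂ b₁ b₂ •
        (spinorL γ (u + v) b₁ c₁ * spinorL γ v b₂ c₂) =
      ∑ b₁, ∑ b₂, orthogonalR (crossingParameter K ι) u b₁ b₂ c₁ c₂ •
        (spinorL γ v a₂ b₂ * spinorL γ (u + v) a₁ b₁) := by
  simp only [orthogonalR_swap _ u c₁ c₂]
  rw [sum_orthogonalR_smul _ u a₁ a₂ fun b₁ b₂ ↦ spinorL γ (u + v) b₁ c₁ * spinorL γ v b₂ c₂,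
    sum_orthogonalR_smul _ u c₁ c₂ fun b₁ b₂ ↦ spinorL γ v a₂ b₂ * spinorL γ (u + v) a₁ b₁,
    hγ.sum_spinorL_mul_spinorL_left, hγ.sum_spinorL_mul_spinorL_right,
    Matrix.isSymm_one.apply a₁ a₂]
  have commutator := hγ.lie_spinorL (u + v) v a₁ a₂ c₁ c₂
  have exchange := hγ.spinorL_mul_sub_spinorL_mul (u + v) v a₁ a₂ c₁ c₂
  rw [Ring.lie_def, sub_eq_iff_eq_add] at commutator
  rw [sub_eq_iff_eq_add] at exchange
  rw [commutator, exchange]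
  module

end SpinorL

end SpinorRLL

/-- The RLL Yang–Baxter relation for the spinor L-operator of `so(n)` with the
fundamental orthogonal R-matrix
`R^{a₁a₂}_{b₁b₂}(u) = u(u+β)·δ^{a₁}_{b₁}δ^{a₂}_{b₂} + (u+β)·δ^{a₁}_{b₂}δ^{a₂}_{b₁}
 − u·δ^{a₁a₂}δ_{b₁b₂}`, `β = n/2 − 1`:
`Σ R^{a₁a₂}_{b₁b₂}(u) L^{b₁c₁}(u+v) L^{b₂c₂}(v) = Σ L^{a₂b₂}(v) L^{a₁b₁}(u+v) R^{b₁b₂}_{c₁c₂}(u)`. -/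
theorem spinor_RLL_YangBaxter {n N : ℕ}
    (γ : Fin n → Matrix (Fin N) (Fin N) ℂ)
    (hγ : ∀ a b, γ a * γ b + γ b * γ a =
      if a = b then (2 : ℂ) • (1 : Matrix (Fin N) (Fin N) ℂ) else 0)
    (L : ℂ → Fin n → Fin n → Matrix (Fin N) (Fin N) ℂ)
    (hL : ∀ u a b, L u a b =
      (u * (if a = b then (1 : ℂ) else 0)) • (1 : Matrix (Fin N) (Fin N) ℂ) -
        (1/2 : ℂ) • ((1/2 : ℂ) • (γ a * γ b - γ b * γ a)))
    (β : ℂ) (hβ : β = (n : ℂ) / 2 - 1)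
    (R : ℂ → Fin n → Fin n → Fin n → Fin n → ℂ)
    (hR : ∀ u a₁ a₂ b₁ b₂, R u a₁ a₂ b₁ b₂ =
      u * (u + β) * (if a₁ = b₁ then (1 : ℂ) else 0) * (if a₂ = b₂ then (1 : ℂ) else 0) +
      (u + β) * (if a₁ = b₂ then (1 : ℂ) else 0) * (if a₂ = b₁ then (1 : ℂ) else 0) -
      u * (if a₁ = a₂ then (1 : ℂ) else 0) * (if b₁ = b₂ then (1 : ℂ) else 0)) :
    ∀ (u v : ℂ) (a₁ a₂ c₁ c₂ : Fin n),
      ∑ b₁, ∑ b₂, R u a₁ a₂ b₁ b₂ • (L (u + v) b₁ c₁ * L v b₂ c₂) =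
        ∑ b₁, ∑ b₂, R u b₁ b₂ c₁ c₂ • (L v a₂ b₂ * L (u + v) a₁ b₁) := by
  intro u v a₁ a₂ c₁ c₂
  have clifford : IsCliffordFamily ℂ γ := fun a b ↦ by simp [hγ, Matrix.one_apply]
  have spinorL_eq : L = spinorL γ := by
    funext u a b; simp only [hL, spinorL, Matrix.one_apply, one_div, invOf_eq_inv]
  have orthogonalR_eq : R = orthogonalR (crossingParameter ℂ (Fin n)) := by
    funext u a₁ a₂ b₁ b₂
    simp only [hR, hβ, orthogonalR, crossingParameter, Matrix.one_apply, Fintype.card_fin,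
      invOf_eq_inv, div_eq_mul_inv]
  simpa only [spinorL_eq, orthogonalR_eq] using
    spinor_RLL_YangBaxter_general clifford u v a₁ a₂ c₁ c₂
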